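/- (Remark 2: equivalence of the boundary value problem with the integral equation.) Let A, B : ℝ → Matrix (Fin n) (Fin n) ℝ and f : ℝ → (Fin n → ℝ) be continuous, let 0 = t₁ < t₂ < … < t_m = 1 with 2 ≤ m, let F₁, …, F_m be constant n×n real matrices and α ∈ ℝⁿ, let Ψ be a fundamental matrix for ẋ = B(t)x (Ψ̇ = B(t)Ψ, Ψ(t) invertible for all t), let Ψ₁, …, Ψ_m satisfy Ψ̇_k = B(t)Ψ_k with Σ_{k=1}^{m} Ψ_k(t) = Ψ(t), and suppose F₀ = Σ_{j=1}^{m} F_j Ψ(t_j) is invertible. Then a continuous function x : ℝ → (Fin n → ℝ) satisfies ẋ(t) = A(t)x(t) + f(t) for all t together with Σ_{j=1}^{m} F_j x(t_j) = α if and only if x satisfies the integral equation x(t) = Ψ(t)·C(x) + Σ_{k=1}^{m} Ψ_k(t) ∫_{t_k}^{t} Ψ(s)⁻¹ [(A(s) − B(s)) x(s) + f(s)] ds for all t, where C(x) = F₀⁻¹ (α − Σ_{j=1}^{m} F_j Σ_{k=1}^{m} Ψ_k(t_j) ∫_{t_k}^{t_j} Ψ(s)⁻¹ [(A(s) − B(s))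 x(s) + f(s)] ds). -/

import Mathlib

open scoped Matrix

lemma aux_mulVec {n : ℕ} {M : ℝ → Matrix (Fin n) (Fin n) ℝ} {M' : Matrix (Fin n) (Fin n) ℝ}
    {v : ℝ → Fin n → ℝ} {v' : Fin n → ℝ} {t : ℝ}
    (hM : ∀ i j, HasDerivAt (fun s => M s i j) (M' i j) t) (hv : HasDerivAt v v' t) :
    HasDerivAt (fun s => M s *ᵥ v s) (M' *ᵥ v t + M t *ᵥ v') t := by
  rw [hasDerivAt_pi] at hv ⊢
  intro i
  have := HasDerivAt.fun_sum (u := Finset.univ) (fun j _ => (hM i j).mul (hv j))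
  simpa [Matrix.mulVec, dotProduct, Finset.sum_add_distrib] using this

section
attribute [local instance] Matrix.linftyOpNormedRing Matrix.linftyOpNormedAlgebra

lemma aux_inv {n : ℕ} {M : ℝ → Matrix (Fin n) (Fin n) ℝ} {M' : Matrix (Fin n) (Fin n) ℝ} {t : ℝ}
    (hM : ∀ i j, HasDerivAt (fun s => M s i j) (M' i j) t) (hu : IsUnit (M t)) :
    ∃ N : Matrix (Fin n) (Fin n) ℝ, ∀ i j, HasDerivAt (fun s => (M s)⁻¹ i j) (N i j) t := by
  have h1 : HasDerivAt M M' t := by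
    refine hasDerivAt_pi.2 fun i => hasDerivAt_pi.2 fun j => hM i j
  obtain ⟨u, hu⟩ := hu
  have h2 := hasFDerivAt_ringInverse (𝕜 := ℝ) u
  rw [hu] at h2
  obtain ⟨N, h3⟩ : ∃ N, HasDerivAt (Ring.inverse ∘ M) N t := ⟨_, h2.comp_hasDerivAt t h1⟩
  refine ⟨N, fun i j => ?_⟩
  have h4 := hasDerivAt_pi.1 (hasDerivAt_pi.1 h3 i) j
  simpa [Function.comp_def, Matrix.nonsing_inv_eq_ringInverse] using h4

end

/-- Remark 2 (equivalence with the integral equation): with `Ψ` a fundamental matrix for the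
"near" system `ẋ = B(t)x`, a splitting `Ψ₁, …, Ψ_m` of `Ψ`, and `F₀ = Σ_j F_j Ψ(t_j)`
invertible, a continuous `x` solves the boundary value problem `ẋ = A(t)x + f(t)`,
`Σ_j F_j x(t_j) = α` iff it solves the integral equation `x = Lx`. -/
theorem stmt_12 (n m : ℕ) (hm : 2 ≤ m)
    (A B : ℝ → Matrix (Fin n) (Fin n) ℝ) (f : ℝ → Fin n → ℝ)
    (hA : Continuous A) (hB : Continuous B) (hf : Continuous f)
    (ts : Fin m → ℝ) (hmono : StrictMono ts)
    (h0 : ts ⟨0, by omega⟩ = 0) (h1 : ts ⟨m - 1, by omega⟩ = 1)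
    (F : Fin m → Matrix (Fin n) (Fin n) ℝ) (α : Fin n → ℝ)
    (Ψ : ℝ → Matrix (Fin n) (Fin n) ℝ)
    (hΨ : ∀ t i j, HasDerivAt (fun s => Ψ s i j) ((B t * Ψ t) i j) t)
    (hΨinv : ∀ t, IsUnit (Ψ t))
    (Ψk : Fin m → ℝ → Matrix (Fin n) (Fin n) ℝ)
    (hΨk : ∀ k t i j, HasDerivAt (fun s => Ψk k s i j) ((B t * Ψk k t) i j) t)
    (hsum : ∀ t, ∑ k, Ψk k t = Ψ t)
    (hF₀ : IsUnit (∑ j, F j * Ψ (ts j)))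
    (x : ℝ → Fin n → ℝ) (hx : Continuous x) :
    ((∀ t, HasDerivAt x (A t *ᵥ x t + f t) t) ∧ ∑ j, F j *ᵥ x (ts j) = α) ↔
      (∀ t, x t =
        Ψ t *ᵥ ((∑ j, F j * Ψ (ts j))⁻¹ *ᵥ
          (α - ∑ j, F j *ᵥ ∑ k, Ψk k (ts j) *ᵥ
            ∫ s in ts k..ts j, (Ψ s)⁻¹ *ᵥ ((A s - B s) *ᵥ x s + f s))) +
        ∑ k, Ψk k t *ᵥ ∫ s in ts k..t, (Ψ s)⁻¹ *ᵥ ((A s - B s) *ᵥ x s + f s)) := by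
  have hdet : ∀ t, IsUnit (Ψ t).det := fun t => (Matrix.isUnit_iff_isUnit_det _).1 (hΨinv t)
  have hdet0 := (Matrix.isUnit_iff_isUnit_det _).1 hF₀
  choose N hN using fun t => aux_inv (hΨ t) (hΨinv t)
  set g : ℝ → Fin n → ℝ := fun s => (Ψ s)⁻¹ *ᵥ ((A s - B s) *ᵥ x s + f s) with hg
  have hinvc : Continuous fun s => (Ψ s)⁻¹ :=
    continuous_pi fun i => continuous_pi fun j =>
      continuous_iff_continuousAt.2 fun t => (hN t i j).continuousAt
  have hgc : Continuous g :=
    hinvc.matrix_mulVec (((hA.sub hB).matrix_mulVec hx).add hf)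
  have hΨg : ∀ t, Ψ t *ᵥ g t = (A t - B t) *ᵥ x t + f t := fun t => by
    simp only [hg, Matrix.mulVec_mulVec, Matrix.mul_nonsing_inv _ (hdet t), Matrix.one_mulVec]
  set y : ℝ → Fin n → ℝ := fun t => ∑ k, Ψk k t *ᵥ ∫ s in ts k..t, g s with hy
  have hyd : ∀ t, HasDerivAt y (B t *ᵥ y t + ((A t - B t) *ᵥ x t + f t)) t := fun t => by
    have := HasDerivAt.fun_sum (u := Finset.univ) (fun k _ => aux_mulVec (hΨk k t)
      (intervalIntegral.integral_hasDerivAt_right (hgc.intervalIntegrable (ts k) t)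
        (hgc.stronglyMeasurableAtFilter _ _) hgc.continuousAt))
    refine HasDerivAt.congr_deriv this ?_
    rw [Finset.sum_add_distrib, ← Matrix.sum_mulVec, hsum, hΨg]
    simp only [hy, Matrix.mulVec_sum, Matrix.mulVec_mulVec]
  change _ ↔ ∀ t, x t = Ψ t *ᵥ ((∑ j, F j * Ψ (ts j))⁻¹ *ᵥ (α - ∑ j, F j *ᵥ y (ts j))) + y t
  have hbd : ∀ c, (∀ t, x t = Ψ t *ᵥ c + y t) → ∑ j, F j *ᵥ x (ts j) =
      (∑ j, F j * Ψ (ts j)) *ᵥ c + ∑ j, F j *ᵥ y (ts j) := fun c hc => by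
    simp only [hc, Matrix.mulVec_add, Finset.sum_add_distrib, Matrix.sum_mulVec,
      Matrix.mulVec_mulVec]
  constructor
  · rintro ⟨hxd, hbc⟩
    have hzd : ∀ t, HasDerivAt (fun s => x s - y s) (B t *ᵥ (x t - y t)) t := fun t => by
      refine HasDerivAt.congr_deriv ((hxd t).sub (hyd t)) ?_
      simp only [Matrix.mulVec_sub, Matrix.sub_mulVec]
      abel
    have hz : ∀ t, x t - y t = Ψ t *ᵥ ((Ψ t)⁻¹ *ᵥ (x t - y t)) := fun t => by
      rw [Matrix.mulVec_mulVec, Matrix.mul_nonsing_inv _ (hdet t), Matrix.one_mulVec]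
    have hw : ∀ t, HasDerivAt (fun s => (Ψ s)⁻¹ *ᵥ (x s - y s)) 0 t := fun t => by
      have h1 := aux_mulVec (hN t) (hzd t)
      have h2 := aux_mulVec (hΨ t) h1
      have h3 := h2.unique ((hzd t).congr_of_eventuallyEq
        (Filter.Eventually.of_forall fun s => (hz s).symm))
      rw [← Matrix.mulVec_mulVec _ (B t), ← hz t, add_eq_left] at h3
      have h4 := congrArg (fun v => (Ψ t)⁻¹ *ᵥ v) h3
      simp only [Matrix.mulVec_mulVec _ (Ψ t)⁻¹ (Ψ t), Matrix.nonsing_inv_mul _ (hdet t),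
        Matrix.one_mulVec, Matrix.mulVec_zero] at h4
      rwa [h4] at h1
    have hconst := is_const_of_deriv_eq_zero (fun t => (hw t).differentiableAt)
      (fun t => (hw t).deriv)
    obtain ⟨c, hc⟩ : ∃ c, ∀ t, x t = Ψ t *ᵥ c + y t :=
      ⟨(Ψ 0)⁻¹ *ᵥ (x 0 - y 0), fun t => by
        have : (Ψ 0)⁻¹ *ᵥ (x 0 - y 0) = (Ψ t)⁻¹ *ᵥ (x t - y t) := hconst 0 t
        rw [this, ← hz t, sub_add_cancel]⟩
    have hb := hbd c hc
    intro t
    rw [← hbc, hb, add_sub_cancel_right, Matrix.mulVec_mulVec c,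
      Matrix.nonsing_inv_mul _ hdet0, Matrix.one_mulVec]
    exact hc t
  · intro h
    generalize hcd : (∑ j, F j * Ψ (ts j))⁻¹ *ᵥ (α - ∑ j, F j *ᵥ y (ts j)) = c at h
    refine ⟨fun t => ?_, ?_⟩
    · have h1 := (aux_mulVec (hΨ t) (hasDerivAt_const t c)).add (hyd t)
      have h2 := h1.congr_of_eventuallyEq (f₁ := x) (Filter.Eventually.of_forall h)
      refine HasDerivAt.congr_deriv h2 ?_
      have h3 : B t *ᵥ x t = (B t * Ψ t) *ᵥ c + B t *ᵥ y t := by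
        conv_lhs => rw [h t]
        rw [Matrix.mulVec_add, Matrix.mulVec_mulVec]
      rw [Matrix.mulVec_zero, add_zero, ← add_assoc, ← h3, Matrix.sub_mulVec]
      abel
    · rw [hbd c h, ← hcd, Matrix.mulVec_mulVec, Matrix.mul_nonsing_inv _ hdet0,
        Matrix.one_mulVec, sub_add_cancel]
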